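/- The Eisenstein series E₄ satisfies the third-order nonlinear ODE: for every τ ∈ ℍ, 80E₄²(E₄''')² + 120(5(E₄')³ − 6E₄E₄'E₄'')E₄''' + 576E₄(E₄'')³ − 20(27(E₄')² + 4E₄³)(E₄'')² + 200E₄²(E₄')²E₄'' − 125E₄(E₄')⁴ = 0. -/

import Mathlib

open Complex

noncomputable section

/-- The normalized derivative `F' = (2πi)⁻¹ dF/dτ`. -/
def nderiv (F : ℂ → ℂ) : ℂ → ℂ := fun τ => (2 * Real.pi * Complex.I)⁻¹ * deriv F τ

/-- `q = e^{2πiτ}`. -/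
def qq (τ : ℂ) : ℂ := Complex.exp (2 * Real.pi * Complex.I * τ)

/-- Sum of the `k`-th powers of the positive divisors of `n`. -/
def sigma' (k n : ℕ) : ℕ := ∑ d ∈ n.divisors, d ^ k

/-- The Eisenstein series `E₄`. -/
def E4 : ℂ → ℂ := fun τ => 1 + 240 * ∑' n : ℕ, (sigma' 3 (n + 1) : ℂ) * qq τ ^ (n + 1)

/-!
The Serre derivatives `D f - (k / 12) E₂ f` of `E₂` (taken with `k = 1`), `E₄` and `E₆` are modular
of level one and weights 4, 6 and 8. In weight less than 12 there are no nonzero cusp forms, so they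
are the multiples of `E₄`, `E₆` and `E₄ ^ 2` given by their limits at `i∞`. These are Ramanujan's
identities; they make the first three derivatives of `E₄` polynomials in `E₂`, `E₄` and `E₆`, and
the differential equation becomes an identity of polynomials.
-/

section

open UpperHalfPlane hiding I
open Real ModularForm EisensteinSeries Derivative Filter
open scoped Manifold MatrixGroups ModularForm Topology

theorem eq_of_slash_invariant_of_tendsto_atImInfty {k : ℤ} (hk : k < 12) {f g : ℍ → ℂ} {c : ℂ}
    (hf : MDiff f) (hg : MDiff g) (hf_inv : ∀ γ : SL(2, ℤ), f ∣[k] γ = f)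
    (hg_inv : ∀ γ : SL(2, ℤ), g ∣[k] γ = g) (hfc : Tendsto f atImInfty (𝓝 c))
    (hgc : Tendsto g atImInfty (𝓝 c)) : f = g := by
  have h_inv (γ : SL(2, ℤ)) : (f - g) ∣[k] γ = f - g := by
    rw [sub_eq_add_neg, SlashAction.add_slash, SlashAction.neg_slash, hf_inv, hg_inv]
  have h_zero : IsZeroAtImInfty (f - g) := by
    simpa only [IsZeroAtImInfty, ZeroAtFilter, sub_self] using! hfc.sub hgc
  let F : CuspForm 𝒮ℒ k :=
    { toFun := f - g
      slash_action_eq' := by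
        rintro _ ⟨γ, rfl⟩
        exact h_inv γ
      holo' := hf.sub hg
      zero_at_cusps' := fun hc ↦ by
        rw [Subgroup.IsArithmetic.isCusp_iff_isCusp_SL2Z] at hc
        rw [OnePoint.isZeroAt_iff_forall_SL2Z hc]
        intro γ _
        rwa [h_inv] }
  have hF : F = 0 :=
    rank_zero_iff_forall_zero.mp (CuspForm.rank_eq_zero_of_weight_lt_twelve hk) F
  exact sub_eq_zero.mp (congrArg DFunLike.coe hF)

theorem tendsto_atImInfty_of_hasSum_qExpansion {h : ℝ} (hh : 0 < h) {f : ℍ → ℂ} {c : ℕ → ℂ}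
    (hf : ∀ τ : ℍ, HasSum (fun m ↦ c m • Function.Periodic.qParam h τ ^ m) (f τ)) :
    Tendsto f atImInfty (𝓝 (c 0)) := by
  have h_lim (m : ℕ) : Tendsto (fun τ : ℍ ↦ c m • Function.Periodic.qParam h τ ^ m) atImInfty
      (𝓝 (c m • 0 ^ m)) :=
    ((qParam_tendsto_atImInfty hh).pow m).const_smul (c m)
  have h_bound : ∀ᶠ τ : ℍ in atImInfty, ∀ m, ‖c m • Function.Periodic.qParam h τ ^ m‖ ≤
      ‖c m • Function.Periodic.qParam h UpperHalfPlane.I ^ m‖ := by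
    filter_upwards [tendsto_comap.eventually (eventually_ge_atTop 1)] with τ hτ m
    have h_norm : ‖Function.Periodic.qParam h τ‖ ≤
        ‖Function.Periodic.qParam h UpperHalfPlane.I‖ := by
      have hτ : 1 ≤ (τ : ℂ).im := hτ
      simp only [Function.Periodic.norm_qParam, coe_I, Complex.I_im]
      refine exp_le_exp.mpr (div_le_div_of_nonneg_right ?_ hh.le)
      nlinarith [pi_pos]
    simp only [norm_smul, norm_pow]
    gcongr
  have h_tsum := tendsto_tsum_of_dominated_convergence (hf UpperHalfPlane.I).summable.norm
    h_lim h_bound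
  rw [tsum_eq_single 0 fun m hm ↦ by simp [hm]] at h_tsum
  simpa using h_tsum.congr fun τ ↦ (hf τ).tsum_eq

theorem tendsto_E2_atImInfty : Tendsto E2 atImInfty (𝓝 1) :=
  tendsto_atImInfty_of_hasSum_qExpansion one_pos
    (c := fun m ↦ if m = 0 then 1 else -24 * ArithmeticFunction.sigma 1 m) fun τ ↦ by
      simpa only [Function.Periodic.qParam, Complex.ofReal_one, div_one]
        using hasSum_qExpansion_E2 (z := τ)

theorem norm_deriv_comp_ofComplex_le {f : ℍ → ℂ} (hf : MDiff f) {M A : ℝ}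
    (hM : ∀ z : ℍ, A ≤ z.im → ‖f z‖ ≤ M) {z : ℍ} (hz : 2 * A ≤ z.im) :
    ‖deriv (f ∘ ofComplex) z‖ ≤ M / (z.im / 2) := by
  have hz_pos := z.im_pos
  have h_im {w : ℂ} (hw : w ∈ Metric.closedBall (z : ℂ) (z.im / 2)) : z.im / 2 ≤ w.im := by
    rw [Metric.mem_closedBall, dist_eq_norm] at hw
    have h_abs := (Complex.abs_im_le_norm (w - z)).trans hw
    rw [Complex.sub_im, UpperHalfPlane.coe_im] at h_abs
    linarith [neg_abs_le (w.im - z.im)]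
  apply Complex.norm_deriv_le_of_forall_mem_sphere_norm_le (by positivity)
  · refine (UpperHalfPlane.mdifferentiable_iff.mp hf).diffContOnCl_ball fun w hw ↦ ?_
    exact (half_pos hz_pos).trans_le (h_im hw)
  · intro w hw
    have hw_im := h_im (Metric.sphere_subset_closedBall hw)
    lift w to ℍ using (half_pos hz_pos).trans_le hw_im
    rw [Function.comp_apply, ofComplex_apply]
    exact hM w (by rw [UpperHalfPlane.coe_im] at hw_im; linarith)

theorem tendsto_normalizedDeriv_atImInfty {f : ℍ → ℂ} (hf : MDiff f)
    (hb : IsBoundedAtImInfty f) : Tendsto (D f) atImInfty (𝓝 0) := by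
  obtain ⟨M, A, hM⟩ := isBoundedAtImInfty_iff.mp hb
  have h_bound : ∀ᶠ z : ℍ in atImInfty, ‖deriv (f ∘ ofComplex) z‖ ≤ M / (z.im / 2) := by
    filter_upwards [tendsto_comap.eventually (eventually_ge_atTop (2 * A))] with z hz
    exact norm_deriv_comp_ofComplex_le hf hM hz
  have h_lim : Tendsto (fun z : ℍ ↦ M / (z.im / 2)) atImInfty (𝓝 0) :=
    (tendsto_comap.atTop_div_const two_pos).const_div_atTop M
  simpa only [mul_zero] using! (squeeze_zero_norm' h_bound h_lim).const_mul (2 * π * Complex.I)⁻¹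

theorem tendsto_serreDerivative_atImInfty {f : ℍ → ℂ} (hf : MDiff f) {c : ℂ}
    (hc : Tendsto f atImInfty (𝓝 c)) (κ : ℂ) :
    Tendsto (serreDerivative κ f) atImInfty (𝓝 (-(κ / 12) * c)) := by
  have h := (tendsto_normalizedDeriv_atImInfty hf (hc.isBigO_one ℝ)).sub
    ((tendsto_E2_atImInfty.const_mul (κ * 12⁻¹)).mul hc)
  convert! h using 2
  ring

theorem serreDerivative_eq_smul {k : ℤ} (hk : k < 12) {κ : ℂ} {f g : ℍ → ℂ} (hf : MDiff f)
    (hg : MDiff g) (hf_inv : ∀ γ : SL(2, ℤ), serreDerivative κ f ∣[k] γ = serreDerivative κ f)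
    (hg_inv : ∀ γ : SL(2, ℤ), g ∣[k] γ = g) (hf_lim : Tendsto f atImInfty (𝓝 1))
    (hg_lim : Tendsto g atImInfty (𝓝 1)) : serreDerivative κ f = -(κ / 12) • g :=
  eq_of_slash_invariant_of_tendsto_atImInfty hk (serreDerivative_mdifferentiable κ hf)
    (hg.const_smul _) hf_inv (fun γ ↦ by rw [ModularForm.SL_smul_slash, hg_inv])
    (tendsto_serreDerivative_atImInfty hf hf_lim κ)
    (by simpa only [smul_eq_mul] using! hg_lim.const_smul (-(κ / 12)))

section EvenWeight

variable {k : ℕ} (hk : 3 ≤ k)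

theorem E_slash (γ : SL(2, ℤ)) : (E hk : ℍ → ℂ) ∣[(k : ℤ)] γ = E hk :=
  SlashInvariantForm.slash_action_eqn (E hk) _ ⟨γ, rfl⟩

theorem tendsto_E_atImInfty (hk_even : Even k) : Tendsto (E hk) atImInfty (𝓝 1) := by
  rw [← E_qExpansion_coeff_zero hk hk_even]
  exact tendsto_atImInfty_of_hasSum_qExpansion one_pos <|
    hasSum_qExpansion one_pos (SlashInvariantFormClass.periodic_comp_ofComplex (E hk)
      one_mem_strictPeriods_SL) (ModularFormClass.holo _) (ModularFormClass.bdd_at_infty (E hk))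

theorem serreDerivative_E_eq_smul (hk_even : Even k) (hk_lt : k < 10) {g : ℍ → ℂ} (hg : MDiff g)
    (hg_inv : ∀ γ : SL(2, ℤ), g ∣[(k + 2 : ℤ)] γ = g) (hg_lim : Tendsto g atImInfty (𝓝 1)) :
    serreDerivative k (E hk) = -(k / 12 : ℂ) • g := by
  refine serreDerivative_eq_smul (by lia) (ModularFormClass.holo _) hg (fun γ ↦ ?_) hg_inv
    (tendsto_E_atImInfty hk hk_even) hg_lim
  simpa only [Int.cast_natCast] using
    serreDerivative_slash_invariant (ModularFormClass.holo (E hk)) (E_slash hk γ)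

end EvenWeight

theorem nderiv_eq_normalizedDeriv {F : ℂ → ℂ} {f : ℍ → ℂ} (h : ∀ z : ℍ, F z = f z) (z : ℍ) :
    nderiv F z = D f z := by
  have h_eq : F =ᶠ[𝓝 (z : ℂ)] f ∘ ofComplex := by
    filter_upwards [isOpen_upperHalfPlaneSet.mem_nhds z.im_pos] with w hw
    rw [Function.comp_apply, ofComplex_apply_of_im_pos hw]
    exact h ⟨w, hw⟩
  rw [nderiv, h_eq.deriv_eq, normalizedDerivOfComplex]

theorem D2_eq_smul (γ : SL(2, ℤ)) :
    D2 γ = (2 * π * Complex.I * γ 1 0) • fun z : ℍ ↦ denom γ z ^ (-1 : ℤ) := by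
  ext z
  simp [D2, div_eq_mul_inv]

theorem mdifferentiable_D2 (γ : SL(2, ℤ)) : MDiff (D2 γ) := by
  rw [D2_eq_smul]
  exact (mdifferentiable_denom_zpow γ (-1)).const_smul _

theorem normalizedDeriv_D2 (γ : SL(2, ℤ)) : D (D2 γ) = (4 * π ^ 2 : ℂ)⁻¹ • D2 γ ^ 2 := by
  ext z
  rw [D2_eq_smul, normalizedDerivOfComplex_smul _ _ (mdifferentiable_denom_zpow γ (-1)),
    Pi.smul_apply, ← nderiv_eq_normalizedDeriv (F := fun w ↦ denom γ w ^ (-1 : ℤ)) (fun _ ↦ rfl),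
    nderiv, deriv_denom_zpow]
  have h_entry : ((γ : GL (Fin 2) ℝ) 1 0 : ℂ) = γ 1 0 := by simp
  have h_denom := denom_ne_zero γ z
  simp only [Pi.smul_apply, Pi.pow_apply, smul_eq_mul, h_entry, zpow_sub_one₀ h_denom,
    zpow_neg_one]
  field_simp
  push_cast
  rw [Complex.I_sq]
  ring

theorem E2_slash (γ : SL(2, ℤ)) : E2 ∣[(2 : ℤ)] γ = E2 - (3 / π ^ 2 : ℂ) • D2 γ := by
  rw [E2_slash_action, riemannZeta_two]
  congr 2
  field_simp
  norm_num

theorem normalizedDeriv_E2_slash (γ : SL(2, ℤ)) :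
    D (E2 ∣[(2 : ℤ)] γ) = D E2 - (3 / (4 * π ^ 4) : ℂ) • D2 γ ^ 2 := by
  have h_D2 := mdifferentiable_D2 γ
  rw [E2_slash, normalizedDerivOfComplex_sub _ _ E2_mdifferentiable (h_D2.const_smul _),
    normalizedDerivOfComplex_smul _ _ h_D2, normalizedDeriv_D2, smul_smul]
  congr 2
  field_simp

theorem serreDerivative_one_E2_slash (γ : SL(2, ℤ)) :
    serreDerivative 1 E2 ∣[(4 : ℤ)] γ = serreDerivative 1 E2 := by
  -- Expanded in `D2 γ`, the linear terms cancel between the two summands below, and so do the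
  -- quadratic ones.
  have h_decomp : serreDerivative 1 E2 = serreDerivative (2 : ℤ) E2 + (12⁻¹ : ℂ) • E2 ^ 2 := by
    ext z
    simp only [serreDerivative_apply, Pi.add_apply, Pi.smul_apply, Pi.pow_apply, smul_eq_mul]
    push_cast
    ring
  have h_sq : (E2 ^ 2) ∣[(4 : ℤ)] γ = (E2 ∣[(2 : ℤ)] γ) ^ 2 := by
    simpa only [pow_two] using! ModularForm.mul_slash_SL2 2 2 γ E2 E2
  rw [h_decomp, SlashAction.add_slash, ModularForm.SL_smul_slash, h_sq,
    show (4 : ℤ) = 2 + 2 from rfl, serreDerivative_slash_equivariant E2_mdifferentiable]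
  ext z
  simp only [Pi.add_apply, serreDerivative_apply, normalizedDeriv_E2_slash]
  simp only [E2_slash, Pi.sub_apply, Pi.smul_apply, Pi.pow_apply, smul_eq_mul]
  field_simp
  push_cast
  ring

theorem normalizedDeriv_E2 : D E2 = (1 / 12 : ℂ) • (E2 ^ 2 - E₄) := by
  have h := serreDerivative_eq_smul (k := 4) (by norm_num) E2_mdifferentiable
    (ModularFormClass.holo E₄) serreDerivative_one_E2_slash (E_slash _) tendsto_E2_atImInfty
    (tendsto_E_atImInfty _ ⟨2, rfl⟩)
  ext z
  have hz := congrFun h z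
  simp only [serreDerivative_apply, Pi.smul_apply, Pi.sub_apply, Pi.pow_apply, smul_eq_mul] at hz ⊢
  linear_combination hz

theorem normalizedDeriv_E₄ : D E₄ = (1 / 3 : ℂ) • (E2 * E₄ - E₆) := by
  have h := serreDerivative_E_eq_smul (k := 4) (by norm_num) ⟨2, rfl⟩ (by norm_num)
    (ModularFormClass.holo E₆) (E_slash _) (tendsto_E_atImInfty _ ⟨3, rfl⟩)
  ext z
  have hz := congrFun h z
  simp only [serreDerivative_apply, Pi.smul_apply, Pi.sub_apply, Pi.mul_apply, smul_eq_mul] at hz ⊢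
  push_cast at hz
  linear_combination hz

theorem normalizedDeriv_E₆ : D E₆ = (1 / 2 : ℂ) • (E2 * E₆ - E₄ ^ 2) := by
  have hE₄ : MDiff E₄ := ModularFormClass.holo E₄
  have hE₄_lim : Tendsto E₄ atImInfty (𝓝 1) := tendsto_E_atImInfty _ ⟨2, rfl⟩
  have hE₄_sq_slash (γ : SL(2, ℤ)) : (E₄ * E₄ : ℍ → ℂ) ∣[(4 + 4 : ℤ)] γ = E₄ * E₄ := by
    rw [ModularForm.mul_slash_SL2]
    exact congrArg₂ _ (E_slash _ γ) (E_slash _ γ)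
  have h := serreDerivative_E_eq_smul (k := 6) (by norm_num) ⟨3, rfl⟩ (by norm_num)
    (hE₄.mul hE₄) hE₄_sq_slash (by simpa only [mul_one] using! hE₄_lim.mul hE₄_lim)
  ext z
  have hz := congrFun h z
  simp only [serreDerivative_apply, Pi.smul_apply, Pi.sub_apply, Pi.mul_apply, Pi.pow_apply,
    smul_eq_mul] at hz ⊢
  push_cast at hz
  linear_combination hz

theorem normalizedDeriv_normalizedDeriv_E₄ :
    D (D E₄) = (5 / 36 : ℂ) • (E2 ^ 2 * E₄ - (2 : ℂ) • (E2 * E₆) + E₄ ^ 2) := by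
  have h2 := E2_mdifferentiable
  have h4 := ModularFormClass.holo E₄
  have h6 := ModularFormClass.holo E₆
  rw [normalizedDeriv_E₄, normalizedDerivOfComplex_smul _ _ ((h2.mul h4).sub h6),
    normalizedDerivOfComplex_sub _ _ (h2.mul h4) h6, normalizedDerivOfComplex_mul _ _ h2 h4,
    normalizedDeriv_E2, normalizedDeriv_E₄, normalizedDeriv_E₆]
  ext z
  simp only [Pi.smul_apply, Pi.add_apply, Pi.sub_apply, Pi.mul_apply, Pi.pow_apply, smul_eq_mul]
  ring

theorem normalizedDeriv_normalizedDeriv_normalizedDeriv_E₄ :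
    D (D (D E₄)) = (5 / 72 : ℂ) •
      (E2 ^ 3 * E₄ - (3 : ℂ) • (E2 ^ 2 * E₆) + (3 : ℂ) • (E2 * E₄ ^ 2) - E₄ * E₆) := by
  have h2 := E2_mdifferentiable
  have h4 := ModularFormClass.holo E₄
  have h6 := ModularFormClass.holo E₆
  have h224 : MDiff (E2 ^ 2 * E₄) := (h2.pow 2).mul h4
  have h26 : MDiff ((2 : ℂ) • (E2 * E₆)) := (h2.mul h6).const_smul _
  rw [normalizedDeriv_normalizedDeriv_E₄,
    normalizedDerivOfComplex_smul _ _ ((h224.sub h26).add (h4.pow 2)),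
    normalizedDerivOfComplex_add _ _ (h224.sub h26) (h4.pow 2),
    normalizedDerivOfComplex_sub _ _ h224 h26, normalizedDerivOfComplex_smul _ _ (h2.mul h6),
    normalizedDerivOfComplex_mul _ _ (h2.pow 2) h4, normalizedDerivOfComplex_mul _ _ h2 h6,
    normalizedDerivOfComplex_pow _ _ h2, normalizedDerivOfComplex_pow _ _ h4,
    normalizedDeriv_E2, normalizedDeriv_E₄, normalizedDeriv_E₆]
  ext z
  simp only [Pi.smul_apply, Pi.add_apply, Pi.sub_apply, Pi.mul_apply, Pi.pow_apply,
    Pi.natCast_apply, smul_eq_mul]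
  push_cast
  ring

theorem E₄_eq_tsum_pnat (z : ℍ) :
    E₄ z = 1 + 240 * ∑' n : ℕ+,
      (ArithmeticFunction.sigma 3 n : ℂ) * Complex.exp (2 * π * Complex.I * z) ^ (n : ℕ) := by
  rw [q_expansion_bernoulli (by norm_num) ⟨2, rfl⟩,
    bernoulli_eq_bernoulli'_of_ne_one (by norm_num), bernoulli'_four]
  norm_num

theorem E4_eq_E₄ (z : ℍ) : E4 z = E₄ z := by
  rw [E₄_eq_tsum_pnat, tsum_pnat_eq_tsum_succ (f := fun n : ℕ ↦
    (ArithmeticFunction.sigma 3 n : ℂ) * Complex.exp (2 * π * Complex.I * z) ^ n)]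
  simp only [E4, qq, sigma', ArithmeticFunction.sigma_apply]

end

/-- The Eisenstein series `E₄` satisfies a third-order nonlinear ODE. -/
theorem E4_third_order_ODE :
    ∀ τ : ℂ, 0 < τ.im →
      80 * E4 τ ^ 2 * (nderiv (nderiv (nderiv E4)) τ) ^ 2 +
      120 * (5 * (nderiv E4 τ) ^ 3 - 6 * E4 τ * nderiv E4 τ * nderiv (nderiv E4) τ) *
        nderiv (nderiv (nderiv E4)) τ +
      576 * E4 τ * (nderiv (nderiv E4) τ) ^ 3 -
      20 * (27 * (nderiv E4 τ) ^ 2 + 4 * E4 τ ^ 3) * (nderiv (nderiv E4) τ) ^ 2 +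
      200 * E4 τ ^ 2 * (nderiv E4 τ) ^ 2 * nderiv (nderiv E4) τ -
      125 * E4 τ * (nderiv E4 τ) ^ 4 = 0 := by
  intro τ hτ
  lift τ to UpperHalfPlane using hτ
  have h₁ := nderiv_eq_normalizedDeriv E4_eq_E₄
  have h₂ := nderiv_eq_normalizedDeriv h₁
  have h₃ := nderiv_eq_normalizedDeriv h₂
  rw [h₃, h₂, h₁, E4_eq_E₄, normalizedDeriv_normalizedDeriv_normalizedDeriv_E₄,
    normalizedDeriv_normalizedDeriv_E₄, normalizedDeriv_E₄]
  simp only [Pi.smul_apply, Pi.add_apply, Pi.sub_apply, Pi.mul_apply, Pi.pow_apply, smul_eq_mul]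
  ring
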